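/- Hölder-in-δ bound for the difference of E_x along a Hölder boundary: Let T > 0 and let s : [0,T] → ℝ satisfy |s(t) − s(τ)| ≤ |t − τ|^β for all t, τ ∈ [0,T], for some β > α_m/2. Then there exists a constant C > 0 (independent of x, t and δ) such that for all t ∈ (0,T], all δ ∈ (0,t) and all x ∈ ℝ, ∫_{t−δ}^{t} |E_x(x − s(t), t − τ) − E_x(x − s(τ), t − τ)| dτ ≤ C δ^{β − α_m/2}. -/

import Mathlib

open MeasureTheory Real Filter Set Topology intervalIntegral

/-- The Wright function `W(z; -β, δ) = ∑ z^k/(k! Γ(δ - βk))`, with `1/Γ` the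
entire reciprocal Gamma function (here `Real.Gamma` vanishes at nonpositive
integers, so division gives the correct value `0`). -/
noncomputable def wrightW (β δ z : ℝ) : ℝ :=
  ∑' k : ℕ, z ^ k / (k.factorial * Real.Gamma (δ - β * k))

/-- Laplace convolution on `(0, ∞)`. -/
noncomputable def laplaceConv (f g : ℝ → ℝ) : ℝ → ℝ :=
  fun t => ∫ τ in (0:ℝ)..t, f τ * g (t - τ)

/-- Iterated Laplace convolution `h₀ ∗ h₁ ∗ ⋯ ∗ hₙ`. -/
noncomputable def iterConv : (n : ℕ) → (Fin (n + 1) → ℝ → ℝ) → ℝ → ℝ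
  | 0, h => h 0
  | n + 1, h => laplaceConv (iterConv n (fun i => h i.castSucc)) (h (Fin.last (n + 1)))

/-- `S^μ_m(t; -ℓ₁, …, -ℓ_m; -α₁, …, -α_m)` with the decomposition `μ₁ = μ`,
`μ_j = 0` for `j ≥ 2`: the Laplace convolution of
`h_j(t) = t^{μ_j - 1} W(-ℓ_j t^{-α_j}; -α_j, μ_j)`.  Indices run over
`Fin (n+1)`, i.e. the number of terms is `m = n + 1 ≥ 1`. -/
noncomputable def Sconv (n : ℕ) (μ : ℝ) (α ℓ : Fin (n + 1) → ℝ) : ℝ → ℝ :=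
  iterConv n (fun j t =>
    t ^ ((if j = 0 then μ else 0) - 1) *
      wrightW (α j) (if j = 0 then μ else 0) (-(ℓ j) * t ^ (-(α j))))

/-- `Γ^μ₁(x,t)`. -/
noncomputable def Gam1 (n : ℕ) (α lam : Fin (n + 1) → ℝ) (μ x t : ℝ) : ℝ :=
  (4 * Real.pi) ^ (-(1/2 : ℝ)) *
    ∫ p in Set.Ioi (0:ℝ),
      p ^ (-(1/2 : ℝ)) * Real.exp (-(|x| ^ 2) / (4 * p)) *
        Sconv n μ α (fun j => lam j * p) t

/-- The kernel `E(x,t) = Γ⁰₁(x,t)`. -/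
noncomputable def kerE (n : ℕ) (α lam : Fin (n + 1) → ℝ) (x t : ℝ) : ℝ :=
  Gam1 n α lam 0 x t

/-- `E_x`, the spatial derivative of `E`. -/
noncomputable def kerEx (n : ℕ) (α lam : Fin (n + 1) → ℝ) (x t : ℝ) : ℝ :=
  deriv (fun y => kerE n α lam y t) x

/-- `E_xx`, the second spatial derivative of `E`. -/
noncomputable def kerExx (n : ℕ) (α lam : Fin (n + 1) → ℝ) (x t : ℝ) : ℝ :=
  deriv (fun y => kerEx n α lam y t) x

/-- The kernel `Z(x,t) = ∑ₖ λₖ Γ^{1-αₖ}₁(x,t)`. -/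
noncomputable def kerZ (n : ℕ) (α lam : Fin (n + 1) → ℝ) (x t : ℝ) : ℝ :=
  ∑ k : Fin (n + 1), lam k * Gam1 n α lam (1 - α k) x t

/-- `Z_x`, the spatial derivative of `Z`. -/
noncomputable def kerZx (n : ℕ) (α lam : Fin (n + 1) → ℝ) (x t : ℝ) : ℝ :=
  deriv (fun y => kerZ n α lam y t) x

/-- `Z_xx`, the second spatial derivative of `Z`. -/
noncomputable def kerZxx (n : ℕ) (α lam : Fin (n + 1) → ℝ) (x t : ℝ) : ℝ :=
  deriv (fun y => kerZx n α lam y t) x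

theorem integrableOn_rpow_mul_exp_neg {a c : ℝ} (ha : -1 < a) (hc : 0 < c) :
    IntegrableOn (fun ρ : ℝ => ρ ^ a * Real.exp (-(c * ρ))) (Ioi 0) := by
  simpa [neg_mul] using integrableOn_rpow_mul_exp_neg_mul_rpow ha one_pos hc

theorem norm_cexp_neg_mul_ofReal (r : ℂ) (ρ : ℝ) :
    ‖Complex.exp (-(r * ρ))‖ = Real.exp (-(r.re * ρ)) := by
  simp [Complex.norm_exp]

theorem aestronglyMeasurable_rpow_mul_cexp (a : ℝ) (r : ℂ) :
    AEStronglyMeasurable (fun ρ : ℝ => ((ρ ^ a : ℝ) : ℂ) * Complex.exp (-(r * ρ)))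
      (volume.restrict (Ioi 0)) := by
  have : Measurable fun ρ : ℝ => ((ρ ^ a : ℝ) : ℂ) * Complex.exp (-(r * ρ)) := by fun_prop
  exact this.aestronglyMeasurable

theorem integrableOn_rpow_mul_cexp {a : ℝ} (ha : -1 < a) {r : ℂ} (hr : 0 < r.re) :
    IntegrableOn (fun ρ : ℝ => ((ρ ^ a : ℝ) : ℂ) * Complex.exp (-(r * ρ))) (Ioi 0) := by
  refine (integrableOn_rpow_mul_exp_neg ha hr).mono'
    (aestronglyMeasurable_rpow_mul_cexp a r) ?_
  filter_upwards [ae_restrict_mem measurableSet_Ioi] with ρ hρ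
  have hρ' : (0:ℝ) < ρ := hρ
  rw [norm_mul, norm_cexp_neg_mul_ofReal, Complex.norm_real, Real.norm_eq_abs,
    abs_of_nonneg (by positivity)]

/-- The Laplace transform of `ρ ^ a` at a complex argument in the right half-plane. -/
theorem integral_rpow_mul_cexp {a : ℝ} (ha : -1 < a) {r : ℂ} (hr : 0 < r.re) :
    ∫ ρ in Ioi (0:ℝ), ((ρ ^ a : ℝ) : ℂ) * Complex.exp (-(r * ρ)) =
      r ^ (-(a + 1) : ℂ) * Real.Gamma (a + 1) := by
  set U : Set ℂ := {z | 0 < z.re} with hU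
  have hUo : IsOpen U := isOpen_lt continuous_const Complex.continuous_re
  set F : ℂ → ℂ := fun r => ∫ ρ in Ioi (0:ℝ), ((ρ ^ a : ℝ) : ℂ) * Complex.exp (-(r * ρ)) with hF
  have hFd : DifferentiableOn ℂ F U := by
    intro r₀ hr₀
    have hr₀' : 0 < r₀.re := hr₀
    suffices HasDerivAt F (∫ ρ in Ioi (0:ℝ),
        ((ρ ^ a : ℝ) : ℂ) * (Complex.exp (-(r₀ * ρ)) * (-(1 * ρ)))) r₀ from
      this.differentiableAt.differentiableWithinAt
    refine (_root_.hasDerivAt_integral_of_dominated_loc_of_deriv_le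
      (μ := volume.restrict (Ioi (0:ℝ)))
      (F := fun r (ρ : ℝ) => ((ρ ^ a : ℝ) : ℂ) * Complex.exp (-(r * ρ)))
      (F' := fun r (ρ : ℝ) => ((ρ ^ a : ℝ) : ℂ) * (Complex.exp (-(r * ρ)) * (-(1 * ρ))))
      (s := {z | r₀.re / 2 < z.re})
      (bound := fun ρ => ρ ^ (a + 1) * Real.exp (-(r₀.re / 2 * ρ)))
      ?_ ?_ (integrableOn_rpow_mul_cexp ha hr₀') ?_ ?_
      (integrableOn_rpow_mul_exp_neg (by linarith) (by positivity)) ?_).2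
    · exact (isOpen_lt continuous_const Complex.continuous_re).mem_nhds
        (show r₀.re / 2 < r₀.re by linarith)
    · exact Eventually.of_forall fun r => aestronglyMeasurable_rpow_mul_cexp a r
    · have : Measurable fun ρ : ℝ =>
          ((ρ ^ a : ℝ) : ℂ) * (Complex.exp (-(r₀ * ρ)) * (-(1 * ρ))) := by fun_prop
      exact this.aestronglyMeasurable
    · filter_upwards [ae_restrict_mem measurableSet_Ioi] with ρ hρ r hr
      have hρ' : (0:ℝ) < ρ := hρ
      have hr' : r₀.re / 2 < r.re := hr
      rw [norm_mul, norm_mul, norm_cexp_neg_mul_ofReal, Complex.norm_real, Real.norm_eq_abs,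
        abs_of_nonneg (by positivity), norm_neg, one_mul, Complex.norm_real, Real.norm_eq_abs,
        abs_of_pos hρ', Real.rpow_add_one hρ'.ne', mul_assoc, mul_comm (Real.exp _)]
      gcongr
    · filter_upwards with ρ r hr
      have h1 : HasDerivAt (fun z : ℂ => -(z * ρ)) (-(1 * (ρ:ℂ))) r :=
        ((hasDerivAt_id r).mul_const (ρ:ℂ)).neg
      exact h1.cexp.const_mul _
  set G : ℂ → ℂ := fun r => r ^ (-(a + 1) : ℂ) * Real.Gamma (a + 1) with hG
  have hGd : DifferentiableOn ℂ G U := by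
    intro z hz
    refine (DifferentiableAt.mul_const ?_ _).differentiableWithinAt
    exact differentiableAt_id.cpow_const (Or.inl hz)
  have hreal : ∀ x : ℝ, 0 < x → F x = G x := by
    intro x hx
    have h := Real.integral_rpow_mul_exp_neg_mul_Ioi (a := a + 1) (by linarith) hx
    have h2 : F x = ((∫ ρ in Ioi (0:ℝ), ρ ^ (a + 1 - 1) * Real.exp (-(x * ρ)) : ℝ) : ℂ) := by
      rw [← integral_complex_ofReal]
      simp [hF]
    rw [h2, h, hG]
    simp only [one_div]
    rw [Real.inv_rpow hx.le, ← Real.rpow_neg hx.le, Complex.ofReal_mul, Complex.ofReal_cpow hx.le]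
    push_cast
    rfl
  have hconn : IsPreconnected U := (convex_halfSpace_re_gt 0).isPreconnected
  have hfreq : ∃ᶠ z in 𝓝[≠] (1:ℂ), F z = G z := by
    have ht : Tendsto (fun n : ℕ => (((1:ℝ) + 1 / (n + 1 : ℝ) : ℝ) : ℂ)) atTop (𝓝[≠] (1:ℂ)) := by
      rw [tendsto_nhdsWithin_iff]
      constructor
      · have := (tendsto_one_div_add_atTop_nhds_zero_nat (𝕜 := ℝ)).const_add (1:ℝ)
        rw [add_zero] at this
        exact (Complex.continuous_ofReal.tendsto 1).comp this
      · refine Eventually.of_forall fun n => ?_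
        have : (0:ℝ) < 1 / (n + 1 : ℝ) := by positivity
        simp only [mem_compl_iff, mem_singleton_iff]
        intro h
        have h' : (1:ℝ) + 1 / (n + 1 : ℝ) = 1 := by exact_mod_cast h
        linarith
    exact ht.frequently (Frequently.of_forall fun n => hreal _ (by positivity))
  exact (hFd.analyticOnNhd hUo).eqOn_of_preconnected_of_frequently_eq (hGd.analyticOnNhd hUo)
    hconn (show (0:ℝ) < (1:ℂ).re by simp) hfreq hr

theorem exists_mul_rpow_le_add {α c z : ℝ} (hα₀ : 0 < α) (hα₁ : α < 1) (hc : 0 < c)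
    (hz : 0 ≤ z) : ∃ B : ℝ, ∀ ρ : ℝ, 0 < ρ → z * ρ ^ α ≤ c * ρ + B := by
  set B : ℝ := (z * c ^ (-α)) ^ (1 - α)⁻¹ with hB
  have hB₀ : 0 ≤ B := by positivity
  refine ⟨B, fun ρ hρ => ?_⟩
  have h := Real.geom_mean_le_arith_mean2_weighted (w₁ := α) (w₂ := 1 - α) (p₁ := c * ρ) (p₂ := B)
    hα₀.le (by linarith) (by positivity) hB₀ (by ring)
  have hBp : B ^ (1 - α) = z * c ^ (-α) := by
    rw [hB, ← Real.rpow_mul (by positivity), inv_mul_cancel₀ (by linarith), Real.rpow_one]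
  have hcc : c ^ α * c ^ (-α) = 1 := by
    rw [← Real.rpow_add hc, add_neg_cancel, Real.rpow_zero]
  have hlhs : (c * ρ) ^ α * B ^ (1 - α) = z * ρ ^ α := by
    rw [hBp, Real.mul_rpow hc.le hρ.le]
    linear_combination z * ρ ^ α * hcc
  rw [hlhs] at h
  have h1 : α * (c * ρ) ≤ 1 * (c * ρ) := by gcongr
  have h2 : (1 - α) * B ≤ 1 * B := by gcongr; linarith
  linarith

theorem integrableOn_exp_mul_rpow_mul_exp_neg {α c z : ℝ} (hα₀ : 0 < α) (hα₁ : α < 1) (hc : 0 < c)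
    (hz : 0 ≤ z) :
    IntegrableOn (fun ρ : ℝ => Real.exp (z * ρ ^ α) * Real.exp (-(c * ρ))) (Ioi 0) := by
  obtain ⟨B, hB⟩ := exists_mul_rpow_le_add hα₀ hα₁ (half_pos hc) hz
  have hint := (integrableOn_rpow_mul_exp_neg (a := 0) (by norm_num) (half_pos hc)).const_mul
    (Real.exp B)
  have hmeas : Measurable fun ρ : ℝ => Real.exp (z * ρ ^ α) * Real.exp (-(c * ρ)) := by fun_prop
  refine hint.mono' hmeas.aestronglyMeasurable ?_
  filter_upwards [ae_restrict_mem measurableSet_Ioi] with ρ hρ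
  have := hB ρ hρ
  rw [Real.norm_eq_abs, abs_of_nonneg (by positivity), Real.rpow_zero, one_mul, ← Real.exp_add,
    ← Real.exp_add]
  exact Real.exp_le_exp.2 (by linarith)

/-- Termwise integration of the exponential series against a complex exponential weight. -/
theorem hasSum_integral_rpow_mul_cexp {α z : ℝ} (hα₀ : 0 < α) (hα₁ : α < 1) (hz : 0 ≤ z)
    {r w : ℂ} (hr : 0 < r.re) (hw : ‖w‖ = 1) :
    HasSum (fun k : ℕ => (-(z : ℂ) * w) ^ k / (k.factorial : ℂ) *
        (r ^ (-((α * k : ℝ) + 1) : ℂ) * Real.Gamma (α * k + 1)))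
      (∫ ρ in Ioi (0:ℝ), Complex.exp (-(z : ℂ) * w * ((ρ ^ α : ℝ) : ℂ)) *
        Complex.exp (-(r * ρ))) := by
  have key := hasSum_integral_of_dominated_convergence (μ := volume.restrict (Ioi (0:ℝ)))
    (F := fun (k : ℕ) (ρ : ℝ) => (-(z : ℂ) * w) ^ k / (k.factorial : ℂ) *
      (((ρ ^ (α * k) : ℝ) : ℂ) * Complex.exp (-(r * ρ))))
    (f := fun ρ : ℝ => Complex.exp (-(z : ℂ) * w * ((ρ ^ α : ℝ) : ℂ)) * Complex.exp (-(r * ρ)))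
    (fun k ρ => (z * ρ ^ α) ^ k / (k.factorial : ℝ) * Real.exp (-(r.re * ρ)))
    (fun k => (aestronglyMeasurable_rpow_mul_cexp _ r).const_mul _) ?_ ?_ ?_ ?_
  · refine (congrArg (HasSum · _) (funext fun k => ?_)).mpr key
    rw [MeasureTheory.integral_const_mul,
      integral_rpow_mul_cexp (lt_of_lt_of_le neg_one_lt_zero (by positivity))
      hr]
  · intro k
    filter_upwards [ae_restrict_mem measurableSet_Ioi] with ρ hρ
    have hρ' : (0:ℝ) < ρ := hρ
    rw [norm_mul, norm_mul, norm_cexp_neg_mul_ofReal, norm_div, norm_pow, norm_mul, norm_neg, hw,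
      Complex.norm_real, Complex.norm_real, Real.norm_of_nonneg hz,
      Real.norm_of_nonneg (by positivity), Complex.norm_natCast, mul_one, mul_pow,
      Real.rpow_mul hρ'.le, Real.rpow_natCast]
    apply le_of_eq
    ring
  · filter_upwards with ρ
    exact (Real.summable_pow_div_factorial _).mul_right _
  · refine (integrableOn_exp_mul_rpow_mul_exp_neg hα₀ hα₁ hr hz).congr ?_
    filter_upwards with ρ
    rw [tsum_mul_right, Real.exp_eq_exp_ℝ,
      (NormedSpace.expSeries_div_hasSum_exp (z * ρ ^ α)).tsum_eq]
  · filter_upwards [ae_restrict_mem measurableSet_Ioi] with ρ hρ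
    have hρ' : (0:ℝ) < ρ := hρ
    have h := (NormedSpace.expSeries_div_hasSum_exp
      (-(z : ℂ) * w * ((ρ ^ α : ℝ) : ℂ))).mul_right (Complex.exp (-(r * ρ)))
    rw [← Complex.exp_eq_exp_ℂ] at h
    refine (congrArg (HasSum · _) (funext fun k => ?_)).mpr h
    rw [Real.rpow_mul hρ'.le, Real.rpow_natCast, mul_pow (-(z : ℂ) * w)]
    push_cast
    ring

theorem inv_Gamma_neg {x : ℝ} (hx : 0 ≤ x) :
    (Real.Gamma (-x))⁻¹ = -(Real.Gamma (x + 1) * Real.sin (Real.pi * x) / Real.pi) := by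
  have h0 : Real.Gamma (x + 1) ≠ 0 := (Real.Gamma_pos_of_pos (by linarith)).ne'
  have h := Real.Gamma_mul_Gamma_one_sub (-x)
  rw [sub_neg_eq_add, add_comm 1 x] at h
  rw [eq_div_of_mul_eq h0 h, mul_neg, Real.sin_neg, inv_div, div_div_eq_mul_div]
  ring

/-- Integral representation of the Wright function, the Hankel contour being collapsed onto
a ray at angle `θ` from the negative half-axis. -/
theorem wrightW_neg_eq_integral {α z θ : ℝ} (hα₀ : 0 < α) (hα₁ : α < 1) (hz : 0 ≤ z)
    (hθ₀ : 0 ≤ θ) (hθ₁ : θ < Real.pi / 2) {r w : ℂ} (hr : r = Complex.exp (-(θ * Complex.I)))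
    (hw : w = Complex.exp ((α * (Real.pi - θ) : ℝ) * Complex.I)) :
    wrightW α 0 (-z) = -(1 / Real.pi) * (r * ∫ ρ in Ioi (0:ℝ),
      Complex.exp (-(z : ℂ) * w * ((ρ ^ α : ℝ) : ℂ)) * Complex.exp (-(r * ρ))).im := by
  have hrre : 0 < r.re := by
    have : r = Complex.exp ((-θ : ℝ) * Complex.I) := by rw [hr]; push_cast; ring_nf
    rw [this, Complex.exp_ofReal_mul_I_re, Real.cos_neg]
    exact Real.cos_pos_of_mem_Ioo ⟨by linarith [Real.pi_pos], hθ₁⟩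
  have hwn : ‖w‖ = 1 := by rw [hw, Complex.norm_exp_ofReal_mul_I]
  have hlog : Complex.log r = -(θ * Complex.I) := by
    rw [hr, Complex.log_exp]
    · simp; linarith [Real.pi_pos]
    · simp; linarith [Real.pi_pos]
  have hr0 : r ≠ 0 := by rw [hr]; exact Complex.exp_ne_zero _
  have hs := ((hasSum_integral_rpow_mul_cexp hα₀ hα₁ hz hrre hwn).mul_left r)
  have hs' := ((Complex.hasSum_im hs).mul_left (-(1 / Real.pi))).tsum_eq
  rw [← hs', wrightW]
  refine tsum_congr fun k => ?_
  have hx : 0 ≤ α * k := by positivity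
  have hphase : r * ((-(z : ℂ) * w) ^ k / (k.factorial : ℂ) *
        (r ^ (-((α * k : ℝ) + 1) : ℂ) * Real.Gamma (α * k + 1))) =
      (((-z) ^ k / (k.factorial : ℝ) * Real.Gamma (α * k + 1) : ℝ) : ℂ) *
        Complex.exp ((Real.pi * (α * k) : ℝ) * Complex.I) := by
    have h1 : r * (w ^ k * r ^ (-((α * k : ℝ) + 1) : ℂ)) =
        Complex.exp ((Real.pi * (α * k) : ℝ) * Complex.I) := by
      rw [Complex.cpow_def_of_ne_zero hr0, hlog, hr, hw, ← Complex.exp_nat_mul, ← Complex.exp_add,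
        ← Complex.exp_add]
      congr 1
      push_cast
      ring
    rw [← h1, mul_pow]
    push_cast
    ring
  rw [hphase, Complex.im_ofReal_mul, Complex.exp_ofReal_mul_I_im, zero_sub]
  rw [← div_div, div_eq_mul_inv _ (Real.Gamma _), inv_Gamma_neg hx]
  ring

theorem norm_cexp_neg_sub_one_le {v : ℂ} (hv : 0 ≤ v.re) :
    ‖Complex.exp (-v) - 1‖ ≤ 2 * ‖v‖ := by
  rcases le_total ‖v‖ 1 with h | h
  · simpa using Complex.norm_exp_sub_one_le (x := -v) (by simpa using h)
  · have h1 : ‖Complex.exp (-v)‖ ≤ 1 := by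
      rw [Complex.norm_exp]
      exact Real.exp_le_one_iff.2 (by simpa using hv)
    calc ‖Complex.exp (-v) - 1‖ ≤ ‖Complex.exp (-v)‖ + ‖(1:ℂ)‖ := norm_sub_le _ _
      _ ≤ 2 * ‖v‖ := by rw [norm_one]; linarith

/-- The profile `z / (1 + z²)`, comparable to `min z z⁻¹`. -/
noncomputable def profile (z : ℝ) : ℝ := z / (1 + z ^ 2)

/-- The Wright function `W(-z; -α, 0)` vanishes linearly at the origin and decays at infinity. -/
theorem exists_abs_wrightW_neg_le {α : ℝ} (hα₀ : 0 < α) (hα₁ : α < 1) :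
    ∃ C : ℝ, 0 ≤ C ∧ ∀ z : ℝ, 0 < z → |wrightW α 0 (-z)| ≤ C * profile z := by
  set ε : ℝ := Real.pi * (1 - α) / 4 with hε
  have hπ := Real.pi_pos
  have hε₀ : 0 < ε := by
    have : 0 < 1 - α := by linarith
    positivity
  have hε₁ : ε < Real.pi / 4 := by rw [hε]; nlinarith
  set θ : ℝ := Real.pi / 2 - ε with hθ
  set r : ℂ := Complex.exp (-(θ * Complex.I)) with hr
  set w : ℂ := Complex.exp ((α * (Real.pi - θ) : ℝ) * Complex.I) with hw
  have hrre : r.re = Real.cos θ := by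
    have : r = Complex.exp ((-θ : ℝ) * Complex.I) := by rw [hr]; push_cast; ring_nf
    rw [this, Complex.exp_ofReal_mul_I_re, Real.cos_neg]
  have hrn : ‖r‖ = 1 := by
    have : r = Complex.exp ((-θ : ℝ) * Complex.I) := by rw [hr]; push_cast; ring_nf
    rw [this, Complex.norm_exp_ofReal_mul_I]
  have hr₀ : 0 < r.re := by
    rw [hrre]; exact Real.cos_pos_of_mem_Ioo ⟨by linarith, by linarith⟩
  have hwn : ‖w‖ = 1 := by rw [hw, Complex.norm_exp_ofReal_mul_I]
  have hw₀ : 0 < w.re := by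
    rw [hw, Complex.exp_ofReal_mul_I_re]
    refine Real.cos_pos_of_mem_Ioo ⟨?_, ?_⟩
    · have : 0 < α * (Real.pi - θ) := mul_pos hα₀ (by linarith)
      linarith
    · rw [hθ, hε]
      nlinarith [mul_pos hπ (sub_pos.2 hα₁), mul_pos (mul_pos hπ (sub_pos.2 hα₁)) (sub_pos.2 hα₁)]
  have hr0 : r ≠ 0 := by rw [hr]; exact Complex.exp_ne_zero _
  have hone : r * ∫ ρ in Ioi (0:ℝ), Complex.exp (-(r * ρ)) = 1 := by
    have h := integral_rpow_mul_cexp (a := 0) (by norm_num) hr₀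
    simp only [Real.rpow_zero, Complex.ofReal_one, one_mul, Complex.ofReal_zero, zero_add,
      Real.Gamma_one, mul_one, Complex.cpow_neg_one] at h
    rw [h, mul_inv_cancel₀ hr0]
  have hI0 : IntegrableOn (fun ρ : ℝ => Complex.exp (-(r * ρ))) (Ioi 0) := by
    simpa using integrableOn_rpow_mul_cexp (a := 0) (by norm_num) hr₀
  set A : ℝ := ∫ ρ in Ioi (0:ℝ), ρ ^ α * Real.exp (-(r.re * ρ)) with hA
  set B : ℝ := ∫ ρ in Ioi (0:ℝ), ρ ^ (-α) * Real.exp (-(r.re * ρ)) with hB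
  have hintA := integrableOn_rpow_mul_exp_neg (a := α) (by linarith) hr₀
  have hintB := integrableOn_rpow_mul_exp_neg (a := -α) (by linarith) hr₀
  have hA₀ : 0 ≤ A := setIntegral_nonneg measurableSet_Ioi fun ρ hρ => by
    have : (0:ℝ) < ρ := hρ
    positivity
  have hB₀ : 0 ≤ B := setIntegral_nonneg measurableSet_Ioi fun ρ hρ => by
    have : (0:ℝ) < ρ := hρ
    positivity
  have hre : ∀ z ρ : ℝ, 0 < z → 0 < ρ →
      ((z : ℂ) * w * ((ρ ^ α : ℝ) : ℂ)).re = z * w.re * ρ ^ α := by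
    intro z ρ _ _
    rw [Complex.re_mul_ofReal, Complex.re_ofReal_mul]
  have hnorm : ∀ z ρ : ℝ, 0 < z → 0 < ρ → ‖(z : ℂ) * w * ((ρ ^ α : ℝ) : ℂ)‖ = z * ρ ^ α := by
    intro z ρ hz hρ
    rw [norm_mul, norm_mul, hwn, Complex.norm_real, Complex.norm_real,
      Real.norm_of_nonneg hz.le, Real.norm_of_nonneg (by positivity), mul_one]
  have hle : ∀ x : ℝ, |-(1 / Real.pi) * x| ≤ |x| := by
    intro x
    rw [abs_mul, abs_neg, abs_of_pos (by positivity)]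
    refine mul_le_of_le_one_left (abs_nonneg _) ?_
    rw [div_le_one hπ]
    linarith [Real.pi_gt_three]
  refine ⟨2 * A + B / w.re, by positivity, fun z hz => ?_⟩
  have hrep := wrightW_neg_eq_integral hα₀ hα₁ hz.le (θ := θ) (by linarith) (by linarith) hr hw
  set J : ℂ := ∫ ρ in Ioi (0:ℝ),
      Complex.exp (-(z : ℂ) * w * ((ρ ^ α : ℝ) : ℂ)) * Complex.exp (-(r * ρ)) with hJ
  have hintJ : IntegrableOn (fun ρ : ℝ => Complex.exp (-(z : ℂ) * w * ((ρ ^ α : ℝ) : ℂ)) *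
      Complex.exp (-(r * ρ))) (Ioi 0) := by
    have hm : Measurable fun ρ : ℝ => Complex.exp (-(z : ℂ) * w * ((ρ ^ α : ℝ) : ℂ)) *
      Complex.exp (-(r * ρ)) := by fun_prop
    refine (hI0.norm).mono' hm.aestronglyMeasurable ?_
    filter_upwards [ae_restrict_mem measurableSet_Ioi] with ρ hρ
    have hρ' : (0:ℝ) < ρ := hρ
    rw [norm_mul]
    refine mul_le_of_le_one_left (norm_nonneg _) ?_
    rw [Complex.norm_exp, neg_mul, neg_mul, Complex.neg_re, hre z ρ hz hρ']
    exact Real.exp_le_one_iff.2 (by simp only [Left.neg_nonpos_iff]; positivity)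
  have hsmall : |wrightW α 0 (-z)| ≤ 2 * A * z := by
    have him : (r * J).im = (r * (J - ∫ ρ in Ioi (0:ℝ), Complex.exp (-(r * ρ)))).im := by
      rw [mul_sub, hone]
      simp
    rw [hrep, him]
    refine (hle _).trans ((Complex.abs_im_le_norm _).trans ?_)
    rw [norm_mul, hrn, one_mul, hJ, ← integral_sub hintJ hI0]
    refine (MeasureTheory.norm_integral_le_of_norm_le (hintA.const_mul (2 * z)) ?_).trans_eq ?_
    · filter_upwards [ae_restrict_mem measurableSet_Ioi] with ρ hρ
      have hρ' : (0:ℝ) < ρ := hρ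
      have h := norm_cexp_neg_sub_one_le (v := (z : ℂ) * w * ((ρ ^ α : ℝ) : ℂ))
        (by rw [hre z ρ hz hρ']; positivity)
      rw [hnorm z ρ hz hρ'] at h
      rw [← sub_one_mul, norm_mul, norm_cexp_neg_mul_ofReal, neg_mul, neg_mul]
      calc _ ≤ 2 * (z * ρ ^ α) * Real.exp (-(r.re * ρ)) := by gcongr
        _ = _ := by ring
    · rw [MeasureTheory.integral_const_mul, ← hA]
      ring
  have hlarge : |wrightW α 0 (-z)| ≤ B / w.re / z := by
    rw [hrep]
    refine (hle _).trans ((Complex.abs_im_le_norm _).trans ?_)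
    rw [norm_mul, hrn, one_mul, hJ]
    refine (MeasureTheory.norm_integral_le_of_norm_le (hintB.const_mul ((z * w.re)⁻¹)) ?_).trans_eq ?_
    · filter_upwards [ae_restrict_mem measurableSet_Ioi] with ρ hρ
      have hρ' : (0:ℝ) < ρ := hρ
      have hy : 0 < z * w.re * ρ ^ α := by positivity
      rw [norm_mul, norm_cexp_neg_mul_ofReal, Complex.norm_exp, neg_mul, neg_mul, Complex.neg_re,
        hre z ρ hz hρ', ← mul_assoc]
      gcongr
      rw [Real.exp_neg, Real.rpow_neg hρ'.le, ← mul_inv]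
      gcongr
      linarith [Real.add_one_le_exp (z * w.re * ρ ^ α)]
    · rw [MeasureTheory.integral_const_mul, ← hB]
      field_simp
  rw [profile, mul_div_assoc', le_div_iff₀ (by positivity)]
  have h2 : |wrightW α 0 (-z)| * z ^ 2 ≤ B / w.re / z * z ^ 2 := by gcongr
  have h3 : B / w.re / z * z ^ 2 = B / w.re * z := by field_simp
  linarith

theorem profile_nonneg {z : ℝ} (hz : 0 ≤ z) : 0 ≤ profile z := by
  unfold profile
  positivity

theorem profile_le_one (z : ℝ) : profile z ≤ 1 := by
  rw [profile, div_le_one (by positivity)]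
  nlinarith [sq_nonneg (z - 1)]

theorem profile_mul_le {c z : ℝ} (hc : 0 < c) (hz : 0 ≤ z) :
    profile (c * z) ≤ (c + c⁻¹) * profile z := by
  rw [profile, profile, mul_div_assoc', div_le_div_iff₀ (by positivity) (by positivity)]
  have h : (c + c⁻¹) * z * (1 + (c * z) ^ 2) - c * z * (1 + z ^ 2) = c⁻¹ * z + c ^ 3 * z ^ 3 := by
    field_simp
    ring
  have : 0 ≤ c⁻¹ * z + c ^ 3 * z ^ 3 := by positivity
  linarith

/-- The majorant `t⁻¹ φ(p t^{-a})` of the Wright kernels, `φ` being `profile`. -/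
noncomputable def majorant (a p t : ℝ) : ℝ := t⁻¹ * profile (p * t ^ (-a))

theorem majorant_nonneg {a p t : ℝ} (hp : 0 ≤ p) (ht : 0 ≤ t) : 0 ≤ majorant a p t :=
  mul_nonneg (inv_nonneg.2 ht) (profile_nonneg (by positivity))

theorem hasDerivAt_arctan_rpow_div {a p t : ℝ} (ha : 0 < a) (hp : 0 < p) (ht : 0 < t) :
    HasDerivAt (fun τ : ℝ => a⁻¹ * Real.arctan (τ ^ a / p)) (majorant a p t) t := by
  have h := (((Real.hasDerivAt_rpow_const (p := a) (Or.inl ht.ne')).div_const p).arctan).const_mul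
    a⁻¹
  refine h.congr_deriv ?_
  have hq : 0 < t ^ a := by positivity
  rw [majorant, profile, Real.rpow_neg ht.le, Real.rpow_sub_one ht.ne']
  field_simp
  ring

theorem intervalIntegrable_majorant {a p t : ℝ} (ha : 0 < a) (hp : 0 < p) (ht : 0 ≤ t) :
    IntervalIntegrable (majorant a p) volume 0 t ∧
      ∫ τ in (0:ℝ)..t, majorant a p τ = a⁻¹ * Real.arctan (t ^ a / p) := by
  have hcont : Continuous fun τ : ℝ => a⁻¹ * Real.arctan (τ ^ a / p) :=
    continuous_const.mul (Real.continuous_arctan.comp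
      ((Real.continuous_rpow_const ha.le).div_const p))
  have hd : ∀ x ∈ Ioo 0 t, HasDerivAt (fun τ : ℝ => a⁻¹ * Real.arctan (τ ^ a / p))
      (majorant a p x) x := fun x hx => hasDerivAt_arctan_rpow_div ha hp hx.1
  have hint : IntervalIntegrable (majorant a p) volume 0 t :=
    intervalIntegrable_deriv_of_nonneg hcont.continuousOn
      (by rwa [min_eq_left ht, max_eq_right ht])
      (fun x hx => by
        rw [min_eq_left ht] at hx
        exact majorant_nonneg hp.le hx.1.le)
  refine ⟨hint, ?_⟩
  rw [integral_eq_sub_of_hasDerivAt_of_le ht hcont.continuousOn hd hint]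
  simp [Real.zero_rpow ha.ne']

theorem majorant_le_of_half_le {a p t τ : ℝ} (ha : 0 < a) (ha₁ : a < 1) (hp : 0 < p) (hτ : 0 < τ)
    (hτt : τ ≤ t) (hhalf : t / 2 ≤ τ) : majorant a p τ ≤ 6 * majorant a p t := by
  have ht : 0 < t := hτ.trans_le hτt
  set c : ℝ := (t / τ) ^ a with hc
  have htτ : 1 ≤ t / τ := by rwa [one_le_div hτ]
  have htτ2 : t / τ ≤ 2 := by rw [div_le_iff₀ hτ]; linarith
  have hc₁ : 1 ≤ c := Real.one_le_rpow htτ ha.le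
  have hc₂ : c ≤ 2 := by
    calc c ≤ (t / τ) ^ (1:ℝ) := Real.rpow_le_rpow_of_exponent_le htτ ha₁.le
      _ ≤ 2 := by rwa [Real.rpow_one]
  have harg : p * τ ^ (-a) = c * (p * t ^ (-a)) := by
    rw [hc, Real.div_rpow ht.le hτ.le, Real.rpow_neg hτ.le, Real.rpow_neg ht.le]
    have : t ^ a ≠ 0 := by positivity
    field_simp
  have hz : 0 ≤ profile (p * t ^ (-a)) := profile_nonneg (by positivity)
  have hinv : τ⁻¹ ≤ 2 * t⁻¹ := by
    rw [← div_eq_mul_inv, inv_eq_one_div, div_le_div_iff₀ hτ ht]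
    linarith
  have hcc : c + c⁻¹ ≤ 3 := by linarith [inv_le_one_of_one_le₀ hc₁]
  calc majorant a p τ = τ⁻¹ * profile (c * (p * t ^ (-a))) := by rw [majorant, harg]
    _ ≤ (2 * t⁻¹) * ((c + c⁻¹) * profile (p * t ^ (-a))) := by
        gcongr
        · exact profile_nonneg (by positivity)
        · exact profile_mul_le (by linarith) (by positivity)
    _ ≤ (2 * t⁻¹) * (3 * profile (p * t ^ (-a))) := by gcongr
    _ = 6 * majorant a p t := by rw [majorant]; ring

theorem arctan_le_self {x : ℝ} (hx : 0 ≤ x) : Real.arctan x ≤ x := by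
  have h := Real.le_tan (x := Real.arctan x) (Real.arctan_nonneg.2 hx)
    (Real.arctan_lt_pi_div_two x)
  rwa [Real.tan_arctan] at h

theorem majorant_mul_arctan_le {a b p t T : ℝ} (hab : a < b) (hp : 0 < p) (ht : 0 < t)
    (htT : t ≤ T) :
    majorant a p t * Real.arctan (t ^ b / p) ≤ (2 * T ^ (b - a) + 1) * majorant b p t := by
  set z : ℝ := p * t ^ (-b) with hz
  set y : ℝ := p * t ^ (-a) with hy
  have hz₀ : 0 < z := by positivity
  have hy₀ : 0 < y := by positivity
  have hyz : y ≤ T ^ (b - a) * z := by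
    have : y = t ^ (b - a) * z := by
      rw [hy, hz, mul_left_comm, ← Real.rpow_add ht]
      ring_nf
    rw [this]
    gcongr
  have harg : t ^ b / p = z⁻¹ := by
    rw [hz, Real.rpow_neg ht.le]
    field_simp
  set A : ℝ := Real.arctan z⁻¹ with hA
  have hA₀ : 0 ≤ A := Real.arctan_nonneg.2 (by positivity)
  have hA₁ : A ≤ z⁻¹ := arctan_le_self (by positivity)
  have hA₂ : A ≤ 2 := by
    have := Real.arctan_lt_pi_div_two z⁻¹
    linarith [Real.pi_le_four]
  have hpy : profile y ≤ y := div_le_self hy₀.le (by nlinarith)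
  have hpy₀ : 0 ≤ profile y := profile_nonneg hy₀.le
  rw [majorant, majorant, ← hy, ← hz, harg, mul_assoc, mul_left_comm (_ + _)]
  refine mul_le_mul_of_nonneg_left ?_ (inv_nonneg.2 ht.le)
  rw [profile.eq_def z, mul_div_assoc', le_div_iff₀ (by positivity)]
  have h1 : profile y * A ≤ (T ^ (b - a) * z) * 2 :=
    mul_le_mul (hpy.trans hyz) hA₂ hA₀ (hy₀.le.trans hyz)
  have h2 : profile y * A * z ^ 2 ≤ 1 * z⁻¹ * z ^ 2 := by
    gcongr
    exact profile_le_one y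
  have h3 : 1 * z⁻¹ * z ^ 2 = z := by field_simp
  linarith

/-- Laplace convolution preserves the majorant with the larger exponent. -/
theorem abs_laplaceConv_le {f g : ℝ → ℝ} {a b p t T A B : ℝ} (ha : 0 < a) (hab : a < b)
    (hb : b < 1) (hp : 0 < p) (ht : 0 < t) (htT : t ≤ T) (hA : 0 ≤ A) (hB : 0 ≤ B)
    (hf : ∀ τ ∈ Ioc 0 T, |f τ| ≤ A * majorant a p τ)
    (hg : ∀ τ ∈ Ioc 0 T, |g τ| ≤ B * majorant b p τ) :
    |laplaceConv f g t| ≤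
      A * B * (6 * (b⁻¹ * (2 * T ^ (b - a) + 1) + a⁻¹ * 2)) * majorant b p t := by
  have hb₀ : 0 < b := ha.trans hab
  obtain ⟨hia, hea⟩ := intervalIntegrable_majorant ha hp ht.le
  obtain ⟨hib, heb⟩ := intervalIntegrable_majorant hb₀ hp ht.le
  have hib' : IntervalIntegrable (fun τ => majorant b p (t - τ)) volume 0 t := by
    simpa using (hib.comp_sub_left t).symm
  have hea' : ∫ τ in (0:ℝ)..t, majorant b p (t - τ) = b⁻¹ * Real.arctan (t ^ b / p) := by
    rw [intervalIntegral.integral_comp_sub_left (fun τ => majorant b p τ) t, sub_self, sub_zero,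
      heb]
  have hbound : ∀ᵐ τ : ℝ, τ ∈ Ioc 0 t → ‖f τ * g (t - τ)‖ ≤
      A * B * 6 * (majorant a p t * majorant b p (t - τ) + majorant b p t * majorant a p τ) := by
    filter_upwards [Measure.ae_ne volume t] with τ hne hτ
    have hτ₀ : 0 < τ := hτ.1
    have hτ₁ : 0 < t - τ := sub_pos.2 (lt_of_le_of_ne hτ.2 hne)
    have hma := majorant_nonneg (a := a) hp.le hτ₀.le
    have hmb := majorant_nonneg (a := b) hp.le hτ₁.le
    have hma' := majorant_nonneg (a := a) hp.le ht.le
    have hmb' := majorant_nonneg (a := b) hp.le ht.le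
    rw [norm_mul, Real.norm_eq_abs, Real.norm_eq_abs]
    calc |f τ| * |g (t - τ)| ≤ (A * majorant a p τ) * (B * majorant b p (t - τ)) := by
          gcongr
          · exact hf τ ⟨hτ₀, hτ.2.trans htT⟩
          · exact hg _ ⟨hτ₁, by linarith⟩
      _ = A * B * (majorant a p τ * majorant b p (t - τ)) := by ring
      _ ≤ A * B * (6 * (majorant a p t * majorant b p (t - τ) +
            majorant b p t * majorant a p τ)) := by
          refine mul_le_mul_of_nonneg_left ?_ (by positivity)
          rcases le_total (t / 2) τ with h | h
          · have := majorant_le_of_half_le ha (hab.trans hb) hp hτ₀ hτ.2 h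
            nlinarith [mul_nonneg hmb' hma, mul_le_mul_of_nonneg_right this hmb]
          · have := majorant_le_of_half_le (t := t) hb₀ hb hp hτ₁ (by linarith) (by linarith)
            nlinarith [mul_nonneg hma' hmb, mul_le_mul_of_nonneg_left this hma]
      _ = _ := by ring
  have h := intervalIntegral.norm_integral_le_of_norm_le ht.le hbound
    (((hib'.const_mul _).add (hia.const_mul _)).const_mul _)
  rw [intervalIntegral.integral_const_mul, intervalIntegral.integral_add (hib'.const_mul _)
    (hia.const_mul _), intervalIntegral.integral_const_mul, intervalIntegral.integral_const_mul,
    hea', hea] at h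
  have h1 := majorant_mul_arctan_le hab hp ht htT
  have h2 : Real.arctan (t ^ a / p) ≤ 2 := by
    have := Real.arctan_lt_pi_div_two (t ^ a / p)
    linarith [Real.pi_le_four]
  have hmb' := majorant_nonneg (a := b) hp.le ht.le
  rw [laplaceConv]
  refine h.trans ?_
  calc _ = A * B * 6 * (b⁻¹ * (majorant a p t * Real.arctan (t ^ b / p)) +
        majorant b p t * (a⁻¹ * Real.arctan (t ^ a / p))) := by ring
    _ ≤ A * B * 6 * (b⁻¹ * ((2 * T ^ (b - a) + 1) * majorant b p t) +
        majorant b p t * (a⁻¹ * 2)) := by gcongr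
    _ = _ := by ring

theorem exists_abs_iterConv_le {T : ℝ} (hT : 0 ≤ T) : ∀ (n : ℕ) (α : Fin (n + 1) → ℝ)
    (h : ℝ → Fin (n + 1) → ℝ → ℝ), StrictMono α → (∀ j, 0 < α j) → (∀ j, α j < 1) →
    (∀ j, ∃ C : ℝ, 0 ≤ C ∧ ∀ p, 0 < p → ∀ t ∈ Ioc 0 T, |h p j t| ≤ C * majorant (α j) p t) →
    ∃ C : ℝ, 0 ≤ C ∧ ∀ p, 0 < p → ∀ t ∈ Ioc 0 T,
      |iterConv n (h p) t| ≤ C * majorant (α (Fin.last n)) p t := by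
  intro n
  induction n with
  | zero =>
    intro α h _ _ _ hh
    exact hh 0
  | succ n ih =>
    intro α h hmono hpos hlt hh
    obtain ⟨A, hA, hA'⟩ := ih (fun i => α i.castSucc) (fun p i => h p i.castSucc)
      (fun i j hij => hmono (Fin.castSucc_lt_castSucc_iff.2 hij)) (fun i => hpos _)
      (fun i => hlt _) (fun i => hh _)
    obtain ⟨B, hB, hB'⟩ := hh (Fin.last (n + 1))
    have hab : α (Fin.last n).castSucc < α (Fin.last (n + 1)) := hmono (Fin.castSucc_lt_last _)
    have h₁ := hpos (Fin.last n).castSucc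
    have h₂ := hpos (Fin.last (n + 1))
    exact ⟨_, by positivity, fun p hp t ht => abs_laplaceConv_le h₁ hab (hlt _) hp ht.1 ht.2 hA hB
      (hA' p hp) (hB' p hp)⟩

theorem exists_abs_Sconv_le {T : ℝ} (hT : 0 ≤ T) {m : ℕ} {α lam : Fin (m + 1) → ℝ}
    (hmono : StrictMono α) (hpos : ∀ j, 0 < α j) (hlt1 : ∀ j, α j < 1) (hlam : ∀ j, 0 < lam j) :
    ∃ C : ℝ, 0 ≤ C ∧ ∀ p, 0 < p → ∀ t ∈ Ioc 0 T,
      |Sconv m 0 α (fun j => lam j * p) t| ≤ C * majorant (α (Fin.last m)) p t := by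
  refine exists_abs_iterConv_le hT m α (fun p j t =>
    t ^ ((if j = 0 then (0:ℝ) else 0) - 1) *
      wrightW (α j) (if j = 0 then 0 else 0) (-(lam j * p) * t ^ (-(α j)))) hmono hpos hlt1 ?_
  intro j
  obtain ⟨C, hC, hC'⟩ := exists_abs_wrightW_neg_le (hpos j) (hlt1 j)
  have hl := hlam j
  refine ⟨C * (lam j + (lam j)⁻¹), by positivity, fun p hp t ht => ?_⟩
  have ht₀ : 0 < t := ht.1
  have hz : 0 < p * t ^ (-(α j)) := by positivity
  have h := hC' (lam j * (p * t ^ (-(α j)))) (by positivity)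
  rw [ite_self, zero_sub, Real.rpow_neg_one, abs_mul, abs_of_pos (by positivity), neg_mul,
    mul_assoc, majorant]
  calc _ ≤ t⁻¹ * (C * ((lam j + (lam j)⁻¹) * profile (p * t ^ (-(α j))))) := by
        gcongr
        exact h.trans (by gcongr; exact profile_mul_le hl hz.le)
    _ = _ := by ring

theorem integrableOn_rpow_div_one_add_mul {b : ℝ} (hb : 0 < b) :
    IntegrableOn (fun p : ℝ => p ^ (-(1/2) : ℝ) / (1 + p * b)) (Ioi 0) ∧
      ∫ p in Ioi (0:ℝ), p ^ (-(1/2) : ℝ) / (1 + p * b) = Real.pi * b ^ (-(1/2) : ℝ) := by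
  have hcont : ContinuousWithinAt
      (fun p : ℝ => 2 * b ^ (-(1/2) : ℝ) * Real.arctan ((p * b) ^ (1/2 : ℝ))) (Ici 0) 0 :=
    (continuous_const.mul (Real.continuous_arctan.comp
      ((Real.continuous_rpow_const (by norm_num)).comp
        (continuous_id.mul continuous_const)))).continuousWithinAt
  have hd : ∀ p ∈ Ioi (0:ℝ), HasDerivAt
      (fun p : ℝ => 2 * b ^ (-(1/2) : ℝ) * Real.arctan ((p * b) ^ (1/2 : ℝ)))
      (p ^ (-(1/2) : ℝ) / (1 + p * b)) p := by
    intro p hp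
    have hp' : (0:ℝ) < p := hp
    have hpb : 0 < p * b := by positivity
    have h := ((((hasDerivAt_id p).mul_const b).rpow_const (p := 1/2)
      (Or.inl hpb.ne')).arctan).const_mul (2 * b ^ (-(1/2) : ℝ))
    refine h.congr_deriv ?_
    have hsq : ((p * b) ^ (1/2 : ℝ)) ^ 2 = p * b := by
      rw [← Real.rpow_natCast, ← Real.rpow_mul hpb.le]
      norm_num
    have hbb : b ^ (-(1/2) : ℝ) * b ^ (-(1/2) : ℝ) * b = 1 := by
      rw [← Real.rpow_add hb, ← Real.rpow_add_one hb.ne']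
      norm_num
    have hexp : (1/2 : ℝ) - 1 = -(1/2) := by norm_num
    simp only [id]
    rw [hsq, hexp, Real.mul_rpow hp'.le hb.le]
    field_simp
    linear_combination hbb
  have hpos : ∀ p ∈ Ioi (0:ℝ), 0 ≤ p ^ (-(1/2) : ℝ) / (1 + p * b) := by
    intro p hp
    have hp' : (0:ℝ) < p := hp
    positivity
  have hlim : Tendsto (fun p : ℝ => 2 * b ^ (-(1/2) : ℝ) * Real.arctan ((p * b) ^ (1/2 : ℝ)))
      atTop (𝓝 (2 * b ^ (-(1/2) : ℝ) * (Real.pi / 2))) :=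
    ((tendsto_nhds_of_tendsto_nhdsWithin Real.tendsto_arctan_atTop).comp
      ((tendsto_rpow_atTop (by norm_num)).comp (tendsto_id.atTop_mul_const hb))).const_mul _
  refine ⟨integrableOn_Ioi_deriv_of_nonneg hcont hd hpos hlim, ?_⟩
  rw [integral_Ioi_of_hasDerivAt_of_nonneg hcont hd hpos hlim]
  simp
  ring

theorem profile_le_div_one_add {z : ℝ} (hz : 0 ≤ z) : profile z ≤ 2 / (1 + z) := by
  rw [profile, div_le_div_iff₀ (by positivity) (by positivity)]
  nlinarith [sq_nonneg (z - 1)]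

theorem profile_le_mul_div_one_add {z : ℝ} (hz : 0 ≤ z) : profile z ≤ 2 * z / (1 + z) := by
  rw [profile, div_le_div_iff₀ (by positivity) (by positivity)]
  nlinarith [mul_nonneg hz (sq_nonneg (z - 1)), mul_nonneg hz (sq_nonneg z)]

theorem hasDerivAt_gauss (p x : ℝ) :
    HasDerivAt (fun y : ℝ => Real.exp (-(|y| ^ 2) / (4 * p)))
      (Real.exp (-(x ^ 2) / (4 * p)) * (-(2 * x) / (4 * p))) x := by
  simp only [sq_abs]
  simpa using (((hasDerivAt_pow 2 x).neg).div_const (4 * p)).exp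

theorem abs_gauss_deriv_sub_le {p : ℝ} (hp : 0 < p) (x y : ℝ) :
    |Real.exp (-(x ^ 2) / (4 * p)) * (-(2 * x) / (4 * p)) -
      Real.exp (-(y ^ 2) / (4 * p)) * (-(2 * y) / (4 * p))| ≤ 1 / (2 * p) * |x - y| := by
  have hd : ∀ z : ℝ, HasDerivAt
      (fun z : ℝ => Real.exp (-(z ^ 2) / (4 * p)) * (-(2 * z) / (4 * p)))
      (Real.exp (-(z ^ 2) / (4 * p)) * (-(2 * z) / (4 * p)) * (-(2 * z) / (4 * p)) +
        Real.exp (-(z ^ 2) / (4 * p)) * (-(2 * 1) / (4 * p))) z := by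
    intro z
    have h := hasDerivAt_gauss p z
    simp only [sq_abs] at h
    exact h.mul ((((hasDerivAt_id z).const_mul 2).neg).div_const (4 * p))
  refine Convex.norm_image_sub_le_of_norm_hasDerivWithin_le (s := univ)
    (fun z _ => (hd z).hasDerivWithinAt) (fun z _ => ?_) convex_univ (mem_univ y) (mem_univ x)
  set u : ℝ := z ^ 2 / (4 * p) with hu
  have hu₀ : 0 ≤ u := by positivity
  have he : Real.exp (-(z ^ 2) / (4 * p)) = (Real.exp u)⁻¹ := by
    rw [← Real.exp_neg, hu, neg_div]
  have hfac : Real.exp (-(z ^ 2) / (4 * p)) * (-(2 * z) / (4 * p)) * (-(2 * z) / (4 * p)) +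
      Real.exp (-(z ^ 2) / (4 * p)) * (-(2 * 1) / (4 * p)) =
      1 / (2 * p) * ((2 * u - 1) / Real.exp u) := by
    rw [he, hu]
    field_simp
    ring
  rw [hfac, Real.norm_eq_abs, abs_mul, abs_of_pos (by positivity : 0 < 1 / (2 * p))]
  refine mul_le_of_le_one_right (by positivity) ?_
  rw [abs_div, Real.abs_exp, div_le_one (Real.exp_pos u), abs_le]
  have := Real.quadratic_le_exp_of_nonneg hu₀
  constructor <;> nlinarith [sq_nonneg (u - 1)]

/-- The spatial derivative of a Gaussian superposition with weight dominated by `profile` is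
globally Lipschitz. -/
theorem abs_deriv_gauss_superposition_sub_le {S : ℝ → ℝ} {M b : ℝ} (hM : 0 ≤ M) (hb : 0 < b)
    (hS : ∀ p, 0 < p → |S p| ≤ M * profile (p * b)) (x y : ℝ) :
    |deriv (fun x => ∫ p in Ioi (0:ℝ),
        p ^ (-(1/2) : ℝ) * Real.exp (-(|x| ^ 2) / (4 * p)) * S p) x -
      deriv (fun x => ∫ p in Ioi (0:ℝ),
        p ^ (-(1/2) : ℝ) * Real.exp (-(|x| ^ 2) / (4 * p)) * S p) y| ≤
      Real.pi * M * b ^ (1/2 : ℝ) * |x - y| := by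
  by_cases hmeas : AEStronglyMeasurable S (volume.restrict (Ioi (0:ℝ)))
  swap
  · have hzero : ∀ x : ℝ, ∫ p in Ioi (0:ℝ),
        p ^ (-(1/2) : ℝ) * Real.exp (-(|x| ^ 2) / (4 * p)) * S p = 0 := by
      intro x
      refine integral_non_aestronglyMeasurable fun h => hmeas ?_
      have hm : Measurable fun p : ℝ => p ^ (1/2 : ℝ) * Real.exp (|x| ^ 2 / (4 * p)) := by fun_prop
      refine (hm.aestronglyMeasurable.mul h).congr ?_
      filter_upwards [ae_restrict_mem measurableSet_Ioi] with p hp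
      have hp' : (0:ℝ) < p := hp
      simp only [Pi.mul_apply]
      rw [neg_div, Real.exp_neg, Real.rpow_neg hp'.le]
      field_simp
    simp only [hzero, deriv_const, sub_self, abs_zero]
    positivity
  obtain ⟨hdom, hdomI⟩ := integrableOn_rpow_div_one_add_mul hb
  have hint : ∀ x : ℝ, IntegrableOn (fun p : ℝ =>
      p ^ (-(1/2) : ℝ) * Real.exp (-(|x| ^ 2) / (4 * p)) * S p) (Ioi 0) := by
    intro x
    have hm : Measurable fun p : ℝ => p ^ (-(1/2) : ℝ) * Real.exp (-(|x| ^ 2) / (4 * p)) := by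
      fun_prop
    refine (hdom.const_mul (2 * M)).mono' (hm.aestronglyMeasurable.mul hmeas) ?_
    filter_upwards [ae_restrict_mem measurableSet_Ioi] with p hp
    have hp' : (0:ℝ) < p := hp
    have he : Real.exp (-(|x| ^ 2) / (4 * p)) ≤ 1 := Real.exp_le_one_iff.2
      (div_nonpos_of_nonpos_of_nonneg (neg_nonpos.2 (by positivity)) (by positivity))
    rw [norm_mul, norm_mul, Real.norm_of_nonneg (by positivity), Real.norm_of_nonneg
      (Real.exp_pos _).le, Real.norm_eq_abs]
    calc _ ≤ p ^ (-(1/2) : ℝ) * 1 * (M * (2 / (1 + p * b))) := by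
          gcongr
          exact (hS p hp').trans (by gcongr; exact profile_le_div_one_add (by positivity))
      _ = _ := by ring
  have hweight : ∀ p : ℝ, 0 < p →
      p ^ (-(1/2) : ℝ) * (1 / (2 * p)) * |S p| ≤ M * b * (p ^ (-(1/2) : ℝ) / (1 + p * b)) := by
    intro p hp
    calc _ ≤ p ^ (-(1/2) : ℝ) * (1 / (2 * p)) * (M * (2 * (p * b) / (1 + p * b))) := by
          gcongr
          exact (hS p hp).trans (by gcongr; exact profile_le_mul_div_one_add (by positivity))
      _ = _ := by field_simp
  have hderiv : ∀ x : ℝ, IntegrableOn (fun p : ℝ => p ^ (-(1/2) : ℝ) *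
        (Real.exp (-(x ^ 2) / (4 * p)) * (-(2 * x) / (4 * p))) * S p) (Ioi 0) ∧
      HasDerivAt (fun x => ∫ p in Ioi (0:ℝ),
        p ^ (-(1/2) : ℝ) * Real.exp (-(|x| ^ 2) / (4 * p)) * S p)
        (∫ p in Ioi (0:ℝ), p ^ (-(1/2) : ℝ) *
          (Real.exp (-(x ^ 2) / (4 * p)) * (-(2 * x) / (4 * p))) * S p) x := by
    intro x
    have hm : Measurable fun p : ℝ => p ^ (-(1/2) : ℝ) *
        (Real.exp (-(x ^ 2) / (4 * p)) * (-(2 * x) / (4 * p))) := by fun_prop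
    refine _root_.hasDerivAt_integral_of_dominated_loc_of_deriv_le
      (μ := volume.restrict (Ioi (0:ℝ)))
      (F := fun x p => p ^ (-(1/2) : ℝ) * Real.exp (-(|x| ^ 2) / (4 * p)) * S p)
      (F' := fun x p => p ^ (-(1/2) : ℝ) *
        (Real.exp (-(x ^ 2) / (4 * p)) * (-(2 * x) / (4 * p))) * S p)
      (bound := fun p => (|x| + 1) * (M * b * (p ^ (-(1/2) : ℝ) / (1 + p * b))))
      (Metric.ball_mem_nhds x one_pos)
      (Eventually.of_forall fun x => (hint x).aestronglyMeasurable) (hint x)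
      (hm.aestronglyMeasurable.mul hmeas) ?_ ((hdom.const_mul (M * b)).const_mul (|x| + 1)) ?_
    · filter_upwards [ae_restrict_mem measurableSet_Ioi] with p hp z hz
      have hp' : (0:ℝ) < p := hp
      have hz' : |z| ≤ |x| + 1 := by
        have h1 : |z - x| < 1 := by rwa [Metric.mem_ball, Real.dist_eq] at hz
        have h2 : |z| ≤ |x| + |z - x| := by simpa using abs_add_le x (z - x)
        linarith
      have hlip := abs_gauss_deriv_sub_le hp' z 0
      simp only [mul_zero, neg_zero, zero_div, sub_zero] at hlip
      rw [norm_mul, norm_mul, Real.norm_of_nonneg (by positivity), Real.norm_eq_abs,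
        Real.norm_eq_abs]
      calc _ ≤ p ^ (-(1/2) : ℝ) * (1 / (2 * p) * (|x| + 1)) * |S p| := by
            gcongr
            exact hlip.trans (by gcongr)
        _ = (|x| + 1) * (p ^ (-(1/2) : ℝ) * (1 / (2 * p)) * |S p|) := by ring
        _ ≤ _ := mul_le_mul_of_nonneg_left (hweight p hp') (by positivity)
    · filter_upwards with p z _
      exact ((hasDerivAt_gauss p z).const_mul _).mul_const _
  rw [(hderiv x).2.deriv, (hderiv y).2.deriv, ← MeasureTheory.integral_sub (hderiv x).1
    (hderiv y).1]
  rw [← Real.norm_eq_abs (integral _ _)]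
  refine (MeasureTheory.norm_integral_le_of_norm_le
    ((hdom.const_mul (M * b)).const_mul |x - y|) ?_).trans_eq ?_
  · filter_upwards [ae_restrict_mem measurableSet_Ioi] with p hp
    have hp' : (0:ℝ) < p := hp
    rw [← sub_mul, ← mul_sub, norm_mul, norm_mul, Real.norm_of_nonneg (by positivity),
      Real.norm_eq_abs, Real.norm_eq_abs]
    calc _ ≤ p ^ (-(1/2) : ℝ) * (1 / (2 * p) * |x - y|) * |S p| := by
          gcongr
          exact abs_gauss_deriv_sub_le hp' x y
      _ = |x - y| * (p ^ (-(1/2) : ℝ) * (1 / (2 * p)) * |S p|) := by ring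
      _ ≤ _ := mul_le_mul_of_nonneg_left (hweight p hp') (abs_nonneg _)
  · rw [MeasureTheory.integral_const_mul, MeasureTheory.integral_const_mul, hdomI]
    have hbb : b * b ^ (-(1/2) : ℝ) = b ^ (1/2 : ℝ) := by
      rw [mul_comm, ← Real.rpow_add_one hb.ne']
      norm_num
    rw [← hbb]
    ring

/-- `E_x(·, t)` is Lipschitz with constant of order `t^{-1-α_m/2}`. -/
theorem exists_abs_kerEx_sub_le {T : ℝ} (hT : 0 ≤ T) {m : ℕ} {α lam : Fin (m + 1) → ℝ}
    (hmono : StrictMono α) (hpos : ∀ j, 0 < α j) (hlt1 : ∀ j, α j < 1) (hlam : ∀ j, 0 < lam j) :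
    ∃ C : ℝ, 0 ≤ C ∧ ∀ t ∈ Ioc 0 T, ∀ x y : ℝ,
      |kerEx m α lam x t - kerEx m α lam y t| ≤
        C * t ^ (-(α (Fin.last m)) / 2 - 1) * |x - y| := by
  obtain ⟨C, hC, hC'⟩ := exists_abs_Sconv_le hT hmono hpos hlt1 hlam
  refine ⟨(4 * Real.pi) ^ (-(1/2) : ℝ) * Real.pi * C, by positivity, fun t ht x y => ?_⟩
  have ht₀ : 0 < t := ht.1
  have hlip := abs_deriv_gauss_superposition_sub_le
    (S := fun p => Sconv m 0 α (fun j => lam j * p) t) (M := C * t⁻¹)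
    (b := t ^ (-(α (Fin.last m)))) (by positivity) (by positivity)
    (fun p hp => (hC' p hp t ht).trans_eq (by rw [majorant, mul_assoc])) x y
  have hpow : t⁻¹ * (t ^ (-(α (Fin.last m)))) ^ (1/2 : ℝ) = t ^ (-(α (Fin.last m)) / 2 - 1) := by
    rw [← Real.rpow_mul ht₀.le, ← Real.rpow_neg_one t, ← Real.rpow_add ht₀]
    ring_nf
  unfold kerEx kerE Gam1
  rw [deriv_const_mul_field, deriv_const_mul_field, ← mul_sub, abs_mul,
    abs_of_nonneg (by positivity)]
  calc _ ≤ (4 * Real.pi) ^ (-(1/2) : ℝ) *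
        (Real.pi * (C * t⁻¹) * (t ^ (-(α (Fin.last m)))) ^ (1/2 : ℝ) * |x - y|) := by gcongr
    _ = _ := by rw [← hpow]; ring

/-- Hölder-in-`δ` bound for the difference of `E_x` along a Hölder boundary:
`∫_{t-δ}^t |E_x(x - s(t), t-τ) - E_x(x - s(τ), t-τ)| dτ ≤ C δ^{β - α_m/2}`. -/
theorem kerEx_difference_bound
    (m : ℕ) (α lam : Fin (m + 1) → ℝ)
    (hmono : StrictMono α) (hpos : ∀ j, 0 < α j) (hlt1 : ∀ j, α j < 1)
    (hlam : ∀ j, 0 < lam j)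
    (T : ℝ) (hT : 0 < T) (s : ℝ → ℝ)
    (β : ℝ) (hβ : α (Fin.last m) / 2 < β)
    (hs : ∀ t ∈ Set.Icc (0:ℝ) T, ∀ τ ∈ Set.Icc (0:ℝ) T, |s t - s τ| ≤ |t - τ| ^ β) :
    ∃ C > (0:ℝ), ∀ t ∈ Set.Ioc (0:ℝ) T, ∀ δ ∈ Set.Ioo (0:ℝ) t, ∀ x : ℝ,
      ∫ τ in (t - δ)..t,
          |kerEx m α lam (x - s t) (t - τ) - kerEx m α lam (x - s τ) (t - τ)| ≤
        C * δ ^ (β - α (Fin.last m) / 2) := by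
  obtain ⟨K, hK, hK'⟩ := exists_abs_kerEx_sub_le hT.le hmono hpos hlt1 hlam
  set a : ℝ := α (Fin.last m) with ha
  set q : ℝ := β - a / 2 with hq
  have hq₀ : 0 < q := sub_pos.2 hβ
  refine ⟨K / q + 1, by positivity, fun t ht δ hδ x => ?_⟩
  have hδ₀ : 0 < δ := hδ.1
  have hle : t - δ ≤ t := by linarith
  have hint : IntervalIntegrable (fun u : ℝ => u ^ (q - 1)) volume 0 δ :=
    intervalIntegral.intervalIntegrable_rpow' (by linarith)
  have hint' : IntervalIntegrable (fun τ : ℝ => K * (t - τ) ^ (q - 1)) volume (t - δ) t := by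
    simpa using ((hint.comp_sub_left t).symm).const_mul K
  have hval : ∫ τ in (t - δ)..t, K * (t - τ) ^ (q - 1) = K / q * δ ^ q := by
    rw [intervalIntegral.integral_const_mul,
      intervalIntegral.integral_comp_sub_left (fun u : ℝ => u ^ (q - 1)) t, sub_self,
      sub_sub_cancel, integral_rpow (Or.inl (by linarith)), sub_add_cancel,
      Real.zero_rpow hq₀.ne', sub_zero]
    ring
  have hbound : ∀ᵐ τ : ℝ, τ ∈ Ioc (t - δ) t →
      ‖|kerEx m α lam (x - s t) (t - τ) - kerEx m α lam (x - s τ) (t - τ)|‖ ≤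
        K * (t - τ) ^ (q - 1) := by
    filter_upwards [Measure.ae_ne volume t] with τ hne hτ
    have hτ₁ : 0 < t - τ := sub_pos.2 (lt_of_le_of_ne hτ.2 hne)
    have hτ₀ : 0 < τ := by linarith [hτ.1, hδ.2]
    have hsτ : |s τ - s t| ≤ (t - τ) ^ β := by
      have h := hs t ⟨ht.1.le, ht.2⟩ τ ⟨hτ₀.le, hτ.2.trans ht.2⟩
      rwa [abs_sub_comm, abs_of_pos hτ₁] at h
    rw [Real.norm_eq_abs, abs_abs]
    refine (hK' (t - τ) ⟨hτ₁, by linarith [ht.2]⟩ _ _).trans ?_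
    rw [sub_sub_sub_cancel_left]
    calc _ ≤ K * (t - τ) ^ (-a / 2 - 1) * (t - τ) ^ β := by gcongr
      _ = K * (t - τ) ^ (q - 1) := by
        rw [mul_assoc, ← Real.rpow_add hτ₁, hq]
        ring_nf
  have h := intervalIntegral.norm_integral_le_of_norm_le hle hbound hint'
  rw [hval] at h
  refine (le_abs_self _).trans (h.trans ?_)
  gcongr
  linarith
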